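/- Let G be a connected simple graph on N vertices with Laplacian matrix L, and let c be a vertex of G such that the pair (L, e_c) is controllable. Let G' be the graph obtained from G by adding one new vertex a adjacent only to c, with Laplacian L' = [[1, −e_cᵀ], [−e_c, L + e_c e_cᵀ]] of order N+1 (the new vertex listed first). Then (L', e_a) is controllable, i.e., G' is Laplacian controllable by an input connected to the new vertex a. -/

import Mathlib

/-!
Write `a` for the basis vector of the new vertex and `J v` for the extension of `v : Fin N → ℝ` by
zero at the new vertex.  The new Laplacian `L'` satisfies `L' a = a - J e_c` and
`L' (J v) = J (L v) + v c • (J e_c - a)`.  Hence `J e_c` is a combination of `a` and `L' a`, and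
`J (L v)` is a combination of `L' (J v)`, `J e_c` and `a`.  By induction, `J (L ^ j e_c)` lies in
the span of `a, L' a, …, L' ^ (j + 1) a` (`extendZero_pow_mem`).  As the vectors `L ^ j e_c` with
`j < N` span `ℝ ^ N`, the vectors `L' ^ j a` with `j < N + 1` span all `J v` together with `a`,
which is everything.
-/

/-- `(M, b)` is controllable: `b, Mb, M²b, …` span the whole space. -/
def IsControllable {ι : Type} [Fintype ι] [DecidableEq ι]
    (M : Matrix ι ι ℝ) (b : ι → ℝ) : Prop :=
  Submodule.span ℝ (Set.range fun j : Fin (Fintype.card ι) => (M ^ (j : ℕ)).mulVec b) = ⊤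

/-- Extension of a vector on `Fin N` by zero at the added vertex `Sum.inl ()`. -/
def extendZero (N : ℕ) : (Fin N → ℝ) →ₗ[ℝ] (Unit ⊕ Fin N → ℝ) where
  toFun v := Sum.elim (fun _ => 0) v
  map_add' v w := by ext (_ | _) <;> simp
  map_smul' r v := by ext (_ | _) <;> simp

/-- The span of the first `k` Krylov vectors `b, M b, …, M ^ (k - 1) b`. -/
def krylov {ι : Type} [Fintype ι] [DecidableEq ι]
    (M : Matrix ι ι ℝ) (b : ι → ℝ) (k : ℕ) : Submodule ℝ (ι → ℝ) :=
  Submodule.span ℝ (Set.range fun j : Fin k => (M ^ (j : ℕ)).mulVec b)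

section Krylov

variable {ι : Type} [Fintype ι] [DecidableEq ι] {M : Matrix ι ι ℝ} {b : ι → ℝ}

theorem pow_mulVec_mem_krylov {j k : ℕ} (h : j < k) : (M ^ j).mulVec b ∈ krylov M b k :=
  Submodule.subset_span ⟨⟨j, h⟩, rfl⟩

theorem krylov_mono {k l : ℕ} (h : k ≤ l) : krylov M b k ≤ krylov M b l := by
  refine Submodule.span_le.2 ?_
  rintro _ ⟨j, rfl⟩
  exact pow_mulVec_mem_krylov (j.2.trans_le h)

theorem mulVec_mem_krylov_succ {k : ℕ} {x : ι → ℝ} (hx : x ∈ krylov M b k) :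
    M.mulVec x ∈ krylov M b (k + 1) := by
  suffices h : krylov M b k ≤ (krylov M b (k + 1)).comap M.mulVecLin from h hx
  refine Submodule.span_le.2 ?_
  rintro _ ⟨j, rfl⟩
  have h := pow_mulVec_mem_krylov (M := M) (b := b) (Nat.succ_lt_succ j.2)
  simpa [pow_succ'] using h

end Krylov

/-- If `M` acts on `b` and on the vectors `extendZero N v` as the Laplacian of the extended graph
does, then each Krylov vector of `(L, e)` extends to a vector in the Krylov space of `(M, b)`
one step further. -/
theorem extendZero_pow_mem {N : ℕ} {c : Fin N} {L : Matrix (Fin N) (Fin N) ℝ} {e : Fin N → ℝ}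
    {M : Matrix (Unit ⊕ Fin N) (Unit ⊕ Fin N) ℝ} {b : Unit ⊕ Fin N → ℝ}
    (hb : M.mulVec b = b - extendZero N e)
    (hM : ∀ v, M.mulVec (extendZero N v) =
      extendZero N (L.mulVec v) + v c • (extendZero N e - b)) (j : ℕ) :
    extendZero N ((L ^ j).mulVec e) ∈ krylov M b (j + 2) := by
  have hb_mem : b ∈ krylov M b 2 := by
    simpa using pow_mulVec_mem_krylov (M := M) (b := b) (j := 0) (k := 2) (by norm_num)
  have he_mem : extendZero N e ∈ krylov M b 2 := by
    have h := pow_mulVec_mem_krylov (M := M) (b := b) (j := 1) (k := 2) (by norm_num)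
    rw [pow_one, hb] at h
    simpa using sub_mem hb_mem h
  induction j with
  | zero => simpa using he_mem
  | succ j ih =>
    have h := hM ((L ^ j).mulVec e)
    rw [Matrix.mulVec_mulVec, ← pow_succ'] at h
    rw [← sub_eq_iff_eq_add.2 h]
    exact sub_mem (mulVec_mem_krylov_succ ih)
      (Submodule.smul_mem _ _ (krylov_mono (by lia) (sub_mem he_mem hb_mem)))

/-- Corollary: appending a pendant vertex preserves single-input
Laplacian controllability.  If a connected simple graph `G` on `N` vertices
with Laplacian `L` is controllable by an input at vertex `c`, then the graph
obtained by adding one new vertex (listed first, index `Sum.inl ()`) adjacent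
only to `c`, with Laplacian `[[1, -e_cᵀ], [-e_c, L + e_c e_cᵀ]]`, is
controllable by an input connected to the new vertex. -/
theorem pendant_vertex_controllable (N : ℕ) (G : SimpleGraph (Fin N))
    [DecidableRel G.Adj] (hG : G.Connected) (c : Fin N)
    (hc : IsControllable (G.lapMatrix ℝ) (fun i => if i = c then 1 else 0)) :
    IsControllable
      (fun p q : Unit ⊕ Fin N =>
        match p, q with
        | Sum.inl _, Sum.inl _ => (1 : ℝ)
        | Sum.inl _, Sum.inr j => if j = c then -1 else 0
        | Sum.inr i, Sum.inl _ => if i = c then -1 else 0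
        | Sum.inr i, Sum.inr j => G.lapMatrix ℝ i j + if i = c ∧ j = c then 1 else 0)
      (fun p => if p = Sum.inl () then 1 else 0) := by
  set L := G.lapMatrix ℝ with hL
  set M : Matrix (Unit ⊕ Fin N) (Unit ⊕ Fin N) ℝ := fun p q =>
    match p, q with
    | Sum.inl _, Sum.inl _ => (1 : ℝ)
    | Sum.inl _, Sum.inr j => if j = c then -1 else 0
    | Sum.inr i, Sum.inl _ => if i = c then -1 else 0
    | Sum.inr i, Sum.inr j => L i j + if i = c ∧ j = c then 1 else 0 with hMdef
  set b : Unit ⊕ Fin N → ℝ := fun p => if p = Sum.inl () then 1 else 0 with hbdef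
  set e : Fin N → ℝ := fun i => if i = c then 1 else 0 with hedef
  have hb : M.mulVec b = b - extendZero N e := by
    ext (_ | i)
    · simp [Matrix.mulVec, dotProduct, hMdef, hbdef, extendZero]
    · by_cases h : i = c <;>
        simp [Matrix.mulVec, dotProduct, hMdef, hbdef, hedef, extendZero, h]
  have hM : ∀ v, M.mulVec (extendZero N v) =
      extendZero N (L.mulVec v) + v c • (extendZero N e - b) := by
    intro v
    ext (_ | i)
    · simp [Matrix.mulVec, dotProduct, hMdef, hbdef, extendZero]
    · by_cases h : i = c <;>
        simp [Matrix.mulVec, dotProduct, hMdef, hbdef, hedef, extendZero, h, add_mul,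
          Finset.sum_add_distrib]
  have hext : ∀ v, extendZero N v ∈ krylov M b (N + 1) := by
    intro v
    suffices h : (⊤ : Submodule ℝ (Fin N → ℝ)) ≤ (krylov M b (N + 1)).comap (extendZero N) from
      h Submodule.mem_top
    rw [← hc]
    refine Submodule.span_le.2 ?_
    rintro _ ⟨j, rfl⟩
    have hj : (j : ℕ) < N := by simpa using j.2
    exact krylov_mono (by lia) (extendZero_pow_mem hb hM j)
  have hbmem : b ∈ krylov M b (N + 1) := by
    simpa using pow_mulVec_mem_krylov (M := M) (b := b) (Nat.succ_pos N)
  have hcard : Fintype.card (Unit ⊕ Fin N) = N + 1 := by simp [add_comm]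
  change krylov M b (Fintype.card (Unit ⊕ Fin N)) = ⊤
  rw [hcard, eq_top_iff]
  intro x _
  have hx : x = x (Sum.inl ()) • b + extendZero N (fun i => x (Sum.inr i)) := by
    ext (_ | i) <;> simp [hbdef, extendZero]
  rw [hx]
  exact add_mem (Submodule.smul_mem _ _ hbmem) (hext _)
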